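/- There exist parameters k ≥ 0, ℓ ≥ −1/2, L₀ > 0, a constant E₀ > 0, radii 0 < R₀ < R₁ < ∞, and a C¹ function y : [0,∞) → ℝ such that: (i) with ϱ and p given by the ansatz integral formulas for 0 < r ≤ R₁ and defined to be 0 for r > R₁, and m the Hawking mass, one has 2m(r)/r < 1 and y′(r) = −(1 − 2m(r)/r)^{−1}[4πr p(r) + m(r)/r²] for all r > 0; (ii) ϱ and p vanish on [0,R₀] and on [R₁,∞), and ϱ(r) > 0 for some r ∈ (R₀,R₁); (iii) the solution is asymptotically flat, i.e. lim_{r→∞} y(r) = ln E₀; and (iv) 4/5 < sup_{r>0} 2m(r)/r < 8/9. (These are static, spherically symmetric, asymptotically flat solutions of the massless Einstein–Vlasov system with compactly supported matter.) -/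

import Mathlib

open MeasureTheory Real Set Filter

/-- The constant `c_ℓ = 2π ∫₀¹ s^ℓ (1-s)^{-1/2} ds`. -/
noncomputable def cConst (ℓ : ℝ) : ℝ :=
  2 * π * ∫ s in Set.Ioc (0 : ℝ) 1, s ^ ℓ / Real.sqrt (1 - s)

/-- Energy density of the massless Einstein--Vlasov ansatz. -/
noncomputable def rho (k ℓ L0 : ℝ) (y : ℝ → ℝ) (r : ℝ) : ℝ :=
  cConst ℓ * r ^ (2 * ℓ) *
    ∫ ε in Set.Ioc (Real.sqrt L0 / r) (Real.exp (y r)),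
      (1 - ε * Real.exp (-(y r))) ^ k * ε ^ 2 * (ε ^ 2 - L0 / r ^ 2) ^ (ℓ + 1 / 2)

/-- Radial pressure of the massless Einstein--Vlasov ansatz. -/
noncomputable def pres (k ℓ L0 : ℝ) (y : ℝ → ℝ) (r : ℝ) : ℝ :=
  (cConst ℓ / (2 * ℓ + 3)) * r ^ (2 * ℓ) *
    ∫ ε in Set.Ioc (Real.sqrt L0 / r) (Real.exp (y r)),
      (1 - ε * Real.exp (-(y r))) ^ k * (ε ^ 2 - L0 / r ^ 2) ^ (ℓ + 3 / 2)

/-- The Hawking mass `m(r) = 4π ∫₀ʳ s² ϱ(s) ds`. -/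
noncomputable def hawkingMass (k ℓ L0 : ℝ) (y : ℝ → ℝ) (r : ℝ) : ℝ :=
  4 * π * ∫ s in Set.Ioc (0 : ℝ) r, s ^ 2 * rho k ℓ L0 y s

/-- The characteristic function `γ(r) = y(r) - (1/2) ln (L₀ / r²)`. -/
noncomputable def charFn (L0 : ℝ) (y : ℝ → ℝ) (r : ℝ) : ℝ :=
  y r - (1 / 2) * Real.log (L0 / r ^ 2)

/-- The inner radius `R₀ = √L₀ e^{-y(0)}`. -/
noncomputable def innerRadius (L0 : ℝ) (y : ℝ → ℝ) : ℝ :=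
  Real.sqrt L0 * Real.exp (-(y 0))

/-- A quasi shell solution of the massless Einstein--Vlasov system. -/
def QuasiShell (k ℓ L0 : ℝ) (y : ℝ → ℝ) : Prop :=
  ContDiffOn ℝ 1 y (Set.Ici 0) ∧
  ∀ r > 0, 2 * hawkingMass k ℓ L0 y r / r < 1 ∧
    HasDerivAt y
      (-(1 - 2 * hawkingMass k ℓ L0 y r / r)⁻¹ *
        (4 * π * r * pres k ℓ L0 y r + hawkingMass k ℓ L0 y r / r ^ 2)) r

/-!
Take `k = 0`, `ℓ = -1/2`, where the ansatz integrals are elementary, and scale the inner radius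
to `1`. With `u = r e^{y(r)} / √L₀` the field equation becomes a system for `u` and `M = 2m`
containing one free amplitude `A`, proportional to `L₀^{3/2}`; matter is present where `u > 1`.

In terms of `x = 2m/r` and `Y = 8πr²p`, the quantity `W = (4 - 3x + Y)² / (1 - x)` starts at `16`
and does not grow where `W ≥ 16`. Hence `W ≤ 16`, which gives `x < 8/9` and `Y ≤ 1/3`. If `A` is
large, the bound on `Y` keeps `u` close to `1`, and this forces `u` to return to `1` at a radius
`R` close to `1`. Over such a thin shell `W` stays close to `16`. At `R` the pressure vanishes and
`u' ≤ 0`, so `x ≥ 2/3`; together with `Y = 0` and `W ≈ 16` this leaves only `x ≈ 8/9`.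
Beyond `R` the solution is continued by the Schwarzschild metric.
-/

/-! ### One-variable calculus on a compact interval -/

theorem mul_sub_le_sub_of_le_hasDerivWithinAt {f f' : ℝ → ℝ} {a b c : ℝ} (hab : a ≤ b)
    (hf : ∀ x ∈ Icc a b, HasDerivWithinAt f (f' x) (Icc a b) x)
    (hc : ∀ x ∈ Icc a b, c ≤ f' x) : c * (b - a) ≤ f b - f a := by
  have hmono : MonotoneOn (fun x => f x - c * x) (Icc a b) :=
    monotoneOn_of_hasDerivWithinAt_nonneg (convex_Icc a b)
      (fun x hx => ((hf x hx).sub ((hasDerivWithinAt_id x _).const_mul c)).continuousWithinAt)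
      (fun x hx => ((hf x (interior_subset hx)).sub
        ((hasDerivWithinAt_id x _).const_mul c)).mono interior_subset)
      (fun x hx => by linarith [hc x (interior_subset hx)])
  have := hmono (left_mem_Icc.2 hab) (right_mem_Icc.2 hab) hab
  linarith

theorem sub_le_mul_sub_of_hasDerivWithinAt_le {f f' : ℝ → ℝ} {a b c : ℝ} (hab : a ≤ b)
    (hf : ∀ x ∈ Icc a b, HasDerivWithinAt f (f' x) (Icc a b) x)
    (hc : ∀ x ∈ Icc a b, f' x ≤ c) : f b - f a ≤ c * (b - a) := by
  have := mul_sub_le_sub_of_le_hasDerivWithinAt hab (fun x hx => (hf x hx).neg)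
    (fun x hx => neg_le_neg (hc x hx))
  simp only [Pi.neg_apply] at this
  linarith

theorem le_of_hasDerivWithinAt_nonpos_of_le {f f' : ℝ → ℝ} {a b c : ℝ}
    (hf : ∀ x ∈ Icc a b, HasDerivWithinAt f (f' x) (Icc a b) x) (ha : f a ≤ c)
    (hc : ∀ x ∈ Icc a b, c ≤ f x → f' x ≤ 0) {x : ℝ} (hx : x ∈ Icc a b) : f x ≤ c := by
  have hbarrier : ∀ e > 0, f x ≤ c + e * (x - a) := fun e he =>
    image_le_of_deriv_right_lt_deriv_boundary (B := fun t => c + e * (t - a)) (B' := fun _ => e)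
      (fun t ht => (hf t ht).continuousWithinAt)
      (fun t ht => (hf t (Ico_subset_Icc_self ht)).mono_of_mem_nhdsWithin
        (Icc_mem_nhdsGE_of_mem ht))
      (by simpa using ha)
      (fun t => by simpa using (((hasDerivAt_id t).sub_const a).const_mul e).const_add c)
      (fun t ht heq => (hc t (Ico_subset_Icc_self ht) (by
        rw [heq]; nlinarith [mul_nonneg he.le (sub_nonneg.2 ht.1)])).trans_lt he) hx
  have hlim : Tendsto (fun e => c + e * (x - a)) (nhdsWithin 0 (Ioi 0)) (nhds (c + 0 * (x - a))) :=
    ((continuous_const.add (continuous_id.mul continuous_const)).tendsto 0).mono_left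
      nhdsWithin_le_nhds
  simpa using ge_of_tendsto hlim (eventually_mem_nhdsWithin.mono hbarrier)

theorem hasDerivWithinAt_nonneg_of_isMaxOn_right {f : ℝ → ℝ} {f' a b : ℝ} (hab : a < b)
    (hf : HasDerivWithinAt f f' (Icc a b) b) (hmax : ∀ x ∈ Icc a b, f x ≤ f b) : 0 ≤ f' := by
  have hcone : a - b ∈ posTangentConeAt (Icc a b) b :=
    mem_posTangentConeAt_of_segment_subset (by
      rw [add_sub_cancel, segment_symm, segment_eq_Icc hab.le])
  have := (show IsMaxOn f (Icc a b) b from hmax).localize.hasFDerivWithinAt_nonpos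
    hf.hasFDerivWithinAt hcone
  simp only [ContinuousLinearMap.toSpanSingleton_apply, smul_eq_mul] at this
  nlinarith

theorem eventually_lt_of_hasDerivWithinAt_pos {f : ℝ → ℝ} {f' a b : ℝ} (hab : a < b)
    (hf : HasDerivWithinAt f f' (Icc a b) a) (hf' : 0 < f') :
    ∀ᶠ x in nhdsWithin a (Ioi a), f a < f x := by
  have hslope := (hasDerivWithinAt_iff_tendsto_slope' (s := Ioi a) (by simp)).1
    ((hf.mono_of_mem_nhdsWithin (Icc_mem_nhdsGE hab)).mono Ioi_subset_Ici_self)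
  filter_upwards [hslope.eventually_const_lt hf', self_mem_nhdsWithin] with x hx hxa
  exact (slope_pos_iff_of_le (mem_Ioi.1 hxa).le).1 hx

theorem exists_first_return {f : ℝ → ℝ} {f' a b : ℝ} (hab : a < b) (hf : ContinuousOn f (Icc a b))
    (hder : HasDerivWithinAt f f' (Icc a b) a) (hf' : 0 < f') :
    ∃ R ∈ Ioc a b, (∀ x ∈ Ioo a R, f a < f x) ∧ (f R = f a ∨ R = b ∧ f a < f b) := by
  obtain ⟨c, hac, hc⟩ : ∃ c ∈ Ioc a b, ∀ x ∈ Ioc a c, f a < f x := by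
    obtain ⟨c, hc, hsub⟩ := mem_nhdsGT_iff_exists_Ioc_subset.1
      (eventually_lt_of_hasDerivWithinAt_pos hab hder hf')
    exact ⟨min c b, ⟨lt_min hc hab, min_le_right _ _⟩,
      fun x hx => hsub ⟨hx.1, hx.2.trans (min_le_left _ _)⟩⟩
  have hcb : ContinuousOn f (Icc c b) := hf.mono (Icc_subset_Icc_left hac.1.le)
  have habove : ∀ x ∈ Icc c b, (∀ t ∈ Icc c x, f t ≠ f a) → f a < f x := by
    intro x hx hne
    by_contra! hle
    obtain ⟨t, ht, hta⟩ := intermediate_value_Icc' hx.1 (hcb.mono (Icc_subset_Icc_right hx.2))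
      ⟨hle, (hc c ⟨hac.1, le_rfl⟩).le⟩
    exact hne t ht hta
  have hbefore : ∀ R ≤ b, (∀ t ∈ Icc c b, f t = f a → R ≤ t) → ∀ x ∈ Ioo a R, f a < f x := by
    intro R hR hmin x hx
    rcases le_total x c with hxc | hcx
    · exact hc x ⟨hx.1, hxc⟩
    · have hxb := hx.2.le.trans hR
      exact habove x ⟨hcx, hxb⟩ fun t ht hta =>
        (hmin t ⟨ht.1, ht.2.trans hxb⟩ hta).not_gt (ht.2.trans_lt hx.2)
  have hcompact : IsCompact (Icc c b ∩ f ⁻¹' {f a}) := isCompact_Icc.of_isClosed_subset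
    (hcb.preimage_isClosed_of_isClosed isClosed_Icc isClosed_singleton) inter_subset_left
  rcases (Icc c b ∩ f ⁻¹' {f a}).eq_empty_or_nonempty with hempty | hne
  · have hno : ∀ t ∈ Icc c b, f t ≠ f a := fun t ht hta => hempty.subset ⟨ht, hta⟩
    exact ⟨b, ⟨hab, le_rfl⟩, hbefore b le_rfl fun t ht hta => absurd hta (hno t ht),
      Or.inr ⟨rfl, habove b ⟨hac.2, le_rfl⟩ hno⟩⟩
  · obtain ⟨R, hR, hmin⟩ := hcompact.exists_isLeast hne
    exact ⟨R, ⟨hac.1.trans_le hR.1.1, hR.1.2⟩, hbefore R hR.1.2 fun t ht hta => hmin ⟨ht, hta⟩,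
      Or.inl hR.2⟩

theorem forall_mem_of_bootstrap {X : Type*} [TopologicalSpace X] {f : ℝ → X} {a b : ℝ}
    {U C : Set X} (hf : ContinuousOn f (Icc a b)) (hU : IsOpen U) (hC : IsClosed C) (hUC : U ⊆ C)
    (ha : f a ∈ C) (himp : ∀ r ∈ Icc a b, (∀ t ∈ Icc a r, f t ∈ C) → f r ∈ U) :
    ∀ r ∈ Icc a b, f r ∈ U := by
  by_contra! hbad
  have hcompact : IsCompact (Icc a b ∩ f ⁻¹' Uᶜ) := isCompact_Icc.of_isClosed_subset
    (hf.preimage_isClosed_of_isClosed isClosed_Icc hU.isClosed_compl) inter_subset_left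
  obtain ⟨r, ⟨hr, hrU⟩, hmin⟩ := hcompact.exists_isLeast hbad
  have hbefore : ∀ t ∈ Ico a r, f t ∈ U := fun t ht => by
    by_contra htU
    exact (hmin ⟨⟨ht.1, ht.2.le.trans hr.2⟩, htU⟩).not_gt ht.2
  refine hrU (himp r hr fun t ht => ?_)
  rcases ht.2.lt_or_eq with htr | rfl
  · exact hUC (hbefore t ⟨ht.1, htr⟩)
  rcases hr.1.eq_or_lt with rfl | har
  · exact ha
  · have hlim : Tendsto f (nhdsWithin t (Ico a t)) (nhds (f t)) :=
      (hf t hr).mono (Ico_subset_Icc_self.trans (Icc_subset_Icc_right hr.2))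
    have : (nhdsWithin t (Ico a t)).NeBot := by
      rw [← mem_closure_iff_nhdsWithin_neBot, closure_Ico har.ne]
      exact ⟨har.le, le_rfl⟩
    exact hC.mem_of_tendsto hlim
      (eventually_mem_nhdsWithin.mono fun x hx => hUC (hbefore x hx))

/-- The extension of `f` from `[a, b]` to the line by its values at the endpoints. It serves to
continue a profile on the support of the matter into the vacuum regions on both sides. -/
noncomputable def clampExtend {a b : ℝ} (hab : a ≤ b) (f : ℝ → ℝ) (x : ℝ) : ℝ :=
  f (projIcc a b hab x)

section ClampExtend

variable {f f' : ℝ → ℝ} {a b : ℝ} (hab : a ≤ b) {x : ℝ}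

theorem clampExtend_of_le_left (hx : x ≤ a) : clampExtend hab f x = f a := by
  rw [clampExtend, projIcc_of_le_left hab hx]

theorem clampExtend_of_right_le (hx : b ≤ x) : clampExtend hab f x = f b := by
  rw [clampExtend, projIcc_of_right_le hab hx]

theorem clampExtend_of_mem (hx : x ∈ Icc a b) : clampExtend hab f x = f x := by
  rw [clampExtend, projIcc_of_mem hab hx]

theorem continuous_clampExtend (hf : ContinuousOn f (Icc a b)) :
    Continuous (clampExtend hab f) :=
  hf.comp_continuous (continuous_subtype_val.comp continuous_projIcc) fun x =>
    (projIcc a b hab x).2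

theorem hasDerivAt_clampExtend (hf : ∀ x ∈ Icc a b, HasDerivWithinAt f (f' x) (Icc a b) x)
    (ha : f' a = 0) (hb : f' b = 0) (x : ℝ) :
    HasDerivAt (clampExtend hab f) (clampExtend hab f' x) x := by
  have hpiece : ∀ (s : Set ℝ) (g g' : ℝ → ℝ), IsClosed s → EqOn (clampExtend hab f) g s →
      EqOn (clampExtend hab f') g' s → (x ∈ s → HasDerivWithinAt g (g' x) s x) →
      HasDerivWithinAt (clampExtend hab f) (clampExtend hab f' x) s x := by
    intro s g g' hs hfg hfg' hg
    by_cases hx : x ∈ s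
    · rw [hfg' hx]
      exact (hg hx).congr hfg (hfg hx)
    · exact HasFDerivWithinAt.of_notMem_closure (by rwa [hs.closure_eq])
  have hleft := hpiece (Iic a) (fun _ => f a) (fun _ => 0) isClosed_Iic
    (fun t ht => clampExtend_of_le_left hab ht)
    (fun t ht => (clampExtend_of_le_left hab ht).trans ha) fun _ => hasDerivWithinAt_const _ _ _
  have hright := hpiece (Ici b) (fun _ => f b) (fun _ => 0) isClosed_Ici
    (fun t ht => clampExtend_of_right_le hab ht)
    (fun t ht => (clampExtend_of_right_le hab ht).trans hb) fun _ => hasDerivWithinAt_const _ _ _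
  have hmid := hpiece (Icc a b) f f' isClosed_Icc (fun t ht => clampExtend_of_mem hab ht)
    (fun t ht => clampExtend_of_mem hab ht) (hf x)
  have := (hleft.union hmid).union hright
  rwa [Iic_union_Icc_eq_Iic hab, Iic_union_Ici, hasDerivWithinAt_univ] at this

end ClampExtend

-- Picard–Lindelöf for the field `F (t, P z)`, which is globally Lipschitz and bounded.
theorem exists_hasDerivWithinAt_while_mem {E : Type*} [NormedAddCommGroup E] [NormedSpace ℝ E]
    [CompleteSpace E] {F : ℝ × E → E} {P : E → E} {K : Set E} {k : NNReal} {a b : ℝ}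
    (hab : a ≤ b) (hKc : IsCompact K) (hKv : Convex ℝ K) (hPK : ∀ z, P z ∈ K)
    (hPid : ∀ z ∈ K, P z = z) (hP : LipschitzWith k P) (hF : ContDiffOn ℝ 1 F (Icc a b ×ˢ K))
    (z₀ : E) : ∃ α : ℝ → E, α a = z₀ ∧ ContinuousOn α (Icc a b) ∧
      ∀ t ∈ Icc a b, α t ∈ K → HasDerivWithinAt α (F (t, α t)) (Icc a b) t := by
  have hK : IsCompact (Icc a b ×ˢ K) := isCompact_Icc.prod hKc
  obtain ⟨C, hC⟩ := hF.exists_lipschitzOnWith one_ne_zero ((convex_Icc a b).prod hKv) hK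
  obtain ⟨L, hL⟩ := hK.exists_bound_of_continuousOn hF.continuousOn
  have hmem : ∀ t ∈ Icc a b, ∀ z, (t, P z) ∈ Icc a b ×ˢ K := fun t ht z => ⟨ht, hPK z⟩
  have haI : a ∈ Icc a b := ⟨le_rfl, hab⟩
  have hL0 : 0 ≤ L := (norm_nonneg _).trans (hL _ (hmem a haI z₀))
  have hPL : IsPicardLindelof (fun t z => F (t, P z)) (⟨a, haI⟩ : Icc a b) z₀
      (⟨L * (b - a), mul_nonneg hL0 (sub_nonneg.2 hab)⟩ : NNReal) 0 ⟨L, hL0⟩ (C * k) :=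
  { lipschitzOnWith t ht := LipschitzOnWith.of_dist_le_mul fun z _ w _ => calc
      dist (F (t, P z)) (F (t, P w)) ≤ C * dist (t, P z) (t, P w) :=
        hC.dist_le_mul _ (hmem t ht z) _ (hmem t ht w)
      _ = C * dist (P z) (P w) := by rw [dist_prod_same_left]
      _ ≤ C * (k * dist z w) := by gcongr; exact hP.dist_le_mul z w
      _ = (C * k : NNReal) * dist z w := by rw [NNReal.coe_mul, mul_assoc]
    continuousOn z _ := hF.continuousOn.comp (by fun_prop) fun t ht => hmem t ht z
    norm_le t ht z _ := hL _ (hmem t ht z)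
    mul_max_le := by
      rw [sub_self, max_eq_left (sub_nonneg.2 hab), NNReal.coe_zero, sub_zero]
      exact le_rfl }
  obtain ⟨α, hα, hderiv⟩ := hPL.exists_eq_forall_mem_Icc_hasDerivWithinAt₀
  exact ⟨α, hα, fun t ht => (hderiv t ht).continuousWithinAt, fun t ht hαt => by
    simpa only [hPid _ hαt] using hderiv t ht⟩

/-! ### The static shell equations in rescaled variables -/

/-- The quantity `8πr²ϱ` for the ansatz with `k = 0` and `ℓ = -1/2`, in terms of the ratio
`u = r e^{y(r)} / √L₀` and of the amplitude `A` collecting all the constants. -/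
noncomputable def scaledDensity (A u r : ℝ) : ℝ :=
  A * (u ^ 3 - 1) / r ^ 2

/-- The quantity `8πr²p` for the same ansatz. -/
noncomputable def scaledPressure (A u r : ℝ) : ℝ :=
  A / 2 * ((u - 1) ^ 2 * (u + 2)) / r ^ 2

/-- The derivative of `u = r e^{y(r)} / √L₀` that the field equation prescribes, where `M` stands
for twice the Hawking mass. -/
noncomputable def growthRate (A r u M : ℝ) : ℝ :=
  u / r * (1 - (M / r + scaledPressure A u r) / (2 * (1 - M / r)))

/-- The functional `W` of the compactness `x = 2m/r` and the scaled pressure `Y = 8πr²p` whose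
variation along a solution of the field equation does not involve the density, and whose bound
`W ≤ 16` yields the Buchdahl inequality `x ≤ 8/9`. -/
noncomputable def buchdahlFn (x Y : ℝ) : ℝ :=
  (4 - 3 * x + Y) ^ 2 / (1 - x)

/-- The rate at which `buchdahlFn` decreases with respect to `log r` along a solution of the field
equation. -/
noncomputable def buchdahlDecay (x Y : ℝ) : ℝ :=
  (4 - 3 * x + Y) * (3 * x ^ 2 + Y ^ 2 - 2 * x + 2 * Y) / (1 - x) ^ 2

section Pointwise

variable {A u r x Y : ℝ}

theorem scaledDensity_one (A r : ℝ) : scaledDensity A 1 r = 0 := by simp [scaledDensity]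

theorem scaledPressure_one (A r : ℝ) : scaledPressure A 1 r = 0 := by simp [scaledPressure]

theorem scaledDensity_nonneg (hA : 0 ≤ A) (hu : 1 ≤ u) : 0 ≤ scaledDensity A u r :=
  div_nonneg (mul_nonneg hA (sub_nonneg.2 (one_le_pow₀ hu))) (sq_nonneg r)

theorem scaledPressure_nonneg (hA : 0 ≤ A) (hu : 1 ≤ u) : 0 ≤ scaledPressure A u r := by
  have : 0 ≤ u + 2 := by linarith
  unfold scaledPressure
  positivity

theorem two_mul_scaledPressure_le (hA : 0 ≤ A) (hu : 1 ≤ u) :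
    2 * scaledPressure A u r ≤ (u - 1) * scaledDensity A u r := by
  have hdiff : (u - 1) * scaledDensity A u r - 2 * scaledPressure A u r
      = A * (u - 1) ^ 2 * (u ^ 2 - 1) / r ^ 2 := by
    unfold scaledDensity scaledPressure
    ring
  have : 0 ≤ u ^ 2 - 1 := sub_nonneg.2 (one_le_pow₀ hu)
  have : 0 ≤ A * (u - 1) ^ 2 * (u ^ 2 - 1) / r ^ 2 := by positivity
  linarith

theorem mul_sq_sub_one_le_of_scaledPressure_le (hA : 0 ≤ A) (hu : 1 ≤ u) (hr : 0 < r)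
    (hY : scaledPressure A u r ≤ 1 / 3) : A * (u - 1) ^ 2 ≤ 2 / 9 * r ^ 2 := by
  rw [scaledPressure, div_le_iff₀ (by positivity)] at hY
  nlinarith [mul_nonneg (mul_nonneg hA (sq_nonneg (u - 1))) (sub_nonneg.2 hu)]

theorem sq_le_of_buchdahlFn_le (hx : x < 1) (hW : buchdahlFn x Y ≤ 16) :
    (4 - 3 * x + Y) ^ 2 ≤ 16 * (1 - x) :=
  (div_le_iff₀ (sub_pos.2 hx)).1 hW

theorem pressure_le_of_buchdahlFn_le (hx : x < 1) (hW : buchdahlFn x Y ≤ 16) : Y ≤ 1 / 3 := by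
  nlinarith [sq_le_of_buchdahlFn_le hx hW, sq_nonneg (9 * x - 4 - 3 * Y)]

theorem compactness_le_of_buchdahlFn_le (hx : x < 1) (hY : 0 ≤ Y) (hW : buchdahlFn x Y ≤ 16) :
    x ≤ 8 / 9 := by
  nlinarith [sq_le_of_buchdahlFn_le hx hW, mul_nonneg hY (sub_nonneg.2 hx.le)]

theorem buchdahlDecay_nonneg_of_le_buchdahlFn (hx : x < 1) (hY : 0 ≤ Y)
    (hW : 16 ≤ buchdahlFn x Y) : 0 ≤ buchdahlDecay x Y := by
  have hsq : 16 * (1 - x) ≤ (4 - 3 * x + Y) ^ 2 := (le_div_iff₀ (sub_pos.2 hx)).1 hW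
  have h₁ : 0 ≤ 4 - 3 * x + Y := by linarith
  have h₂ : 0 ≤ 3 * x ^ 2 + Y ^ 2 - 2 * x + 2 * Y := by nlinarith [sq_nonneg (x + Y)]
  unfold buchdahlDecay
  positivity

theorem buchdahlDecay_le (hx₀ : 0 ≤ x) (hx : x ≤ 8 / 9) (hY₀ : 0 ≤ Y) (hY : Y ≤ 1 / 3) :
    buchdahlDecay x Y ≤ 500 := by
  have hfactor : 3 * x ^ 2 + Y ^ 2 - 2 * x + 2 * Y ≤ 7 / 5 := by nlinarith
  have hdenom : 1 / 81 ≤ (1 - x) ^ 2 := by nlinarith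
  rw [buchdahlDecay, div_le_iff₀ (by linarith)]
  calc (4 - 3 * x + Y) * (3 * x ^ 2 + Y ^ 2 - 2 * x + 2 * Y)
      ≤ (4 - 3 * x + Y) * (7 / 5) := by gcongr; linarith
    _ ≤ 500 * (1 - x) ^ 2 := by linarith

end Pointwise

/-- A solution of the field equation on `[1, R]`, normalised so that the matter starts at radius
`1`: `u = r e^{y(r)} / √L₀` and `M` is twice the Hawking mass. -/
structure IsShellProfile (A : ℝ) (u M : ℝ → ℝ) (R : ℝ) : Prop where
  one_le_radius : 1 ≤ R
  hasDerivWithinAt_ratio : ∀ r ∈ Icc 1 R,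
    HasDerivWithinAt u (growthRate A r (u r) (M r)) (Icc 1 R) r
  hasDerivWithinAt_mass : ∀ r ∈ Icc 1 R,
    HasDerivWithinAt M (scaledDensity A (u r) r) (Icc 1 R) r
  ratio_one : u 1 = 1
  mass_one : M 1 = 0
  one_le_ratio : ∀ r ∈ Icc 1 R, 1 ≤ u r
  mass_lt : ∀ r ∈ Icc 1 R, M r < r

namespace IsShellProfile

variable {A R r : ℝ} {u M : ℝ → ℝ}

theorem restrict (h : IsShellProfile A u M R) {R' : ℝ} (hR' : R' ∈ Icc 1 R) :
    IsShellProfile A u M R' :=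
  have hsub : Icc 1 R' ⊆ Icc 1 R := Icc_subset_Icc_right hR'.2
  { one_le_radius := hR'.1
    hasDerivWithinAt_ratio := fun r hr => (h.hasDerivWithinAt_ratio r (hsub hr)).mono hsub
    hasDerivWithinAt_mass := fun r hr => (h.hasDerivWithinAt_mass r (hsub hr)).mono hsub
    ratio_one := h.ratio_one
    mass_one := h.mass_one
    one_le_ratio := fun r hr => h.one_le_ratio r (hsub hr)
    mass_lt := fun r hr => h.mass_lt r (hsub hr) }

theorem one_mem (h : IsShellProfile A u M R) : (1 : ℝ) ∈ Icc 1 R := ⟨le_rfl, h.one_le_radius⟩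

theorem radius_mem (h : IsShellProfile A u M R) : R ∈ Icc 1 R := ⟨h.one_le_radius, le_rfl⟩

theorem compactness_lt_one (h : IsShellProfile A u M R) (hr : r ∈ Icc 1 R) : M r / r < 1 :=
  (div_lt_one (one_pos.trans_le hr.1)).2 (h.mass_lt r hr)

theorem scaledPressure_nonneg (h : IsShellProfile A u M R) (hA : 0 ≤ A) (hr : r ∈ Icc 1 R) :
    0 ≤ scaledPressure A (u r) r :=
  _root_.scaledPressure_nonneg hA (h.one_le_ratio r hr)

theorem monotoneOn_mass (h : IsShellProfile A u M R) (hA : 0 ≤ A) : MonotoneOn M (Icc 1 R) :=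
  monotoneOn_of_hasDerivWithinAt_nonneg (convex_Icc 1 R)
    (fun r hr => (h.hasDerivWithinAt_mass r hr).continuousWithinAt)
    (fun r hr => (h.hasDerivWithinAt_mass r (interior_subset hr)).mono interior_subset)
    (fun r hr => scaledDensity_nonneg hA (h.one_le_ratio r (interior_subset hr)))

theorem mass_nonneg (h : IsShellProfile A u M R) (hA : 0 ≤ A) (hr : r ∈ Icc 1 R) : 0 ≤ M r :=
  h.mass_one ▸ h.monotoneOn_mass hA h.one_mem hr hr.1

theorem compactness_nonneg (h : IsShellProfile A u M R) (hA : 0 ≤ A) (hr : r ∈ Icc 1 R) :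
    0 ≤ M r / r :=
  div_nonneg (h.mass_nonneg hA hr) (zero_le_one.trans hr.1)

theorem hasDerivWithinAt_compactness (h : IsShellProfile A u M R) (hr : r ∈ Icc 1 R) :
    HasDerivWithinAt (fun s => M s / s) ((scaledDensity A (u r) r - M r / r) / r) (Icc 1 R) r := by
  have hr0 : r ≠ 0 := (one_pos.trans_le hr.1).ne'
  convert! (h.hasDerivWithinAt_mass r hr).div (hasDerivWithinAt_id r _) hr0 using 1
  simp only [id]
  field_simp

theorem hasDerivWithinAt_scaledPressure (h : IsShellProfile A u M R) (hr : r ∈ Icc 1 R) :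
    HasDerivWithinAt (fun s => scaledPressure A (u s) s)
      ((scaledDensity A (u r) r - scaledPressure A (u r) r
        - (scaledDensity A (u r) r + scaledPressure A (u r) r)
          * ((M r / r + scaledPressure A (u r) r) / (2 * (1 - M r / r)))) / r) (Icc 1 R) r := by
  have hr0 : r ≠ 0 := (one_pos.trans_le hr.1).ne'
  have hu := h.hasDerivWithinAt_ratio r hr
  convert! ((((hu.sub_const 1).pow 2).mul (hu.add_const 2)).const_mul (A / 2)).div
    ((hasDerivWithinAt_id r (Icc 1 R)).pow 2) (pow_ne_zero 2 hr0) using 1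
  simp only [id, Pi.pow_apply, Pi.mul_apply, growthRate]
  generalize (M r / r + scaledPressure A (u r) r) / (2 * (1 - M r / r)) = w
  unfold scaledDensity scaledPressure
  field_simp
  ring

theorem hasDerivWithinAt_buchdahlFn (h : IsShellProfile A u M R) (hr : r ∈ Icc 1 R) :
    HasDerivWithinAt (fun s => buchdahlFn (M s / s) (scaledPressure A (u s) s))
      (-(buchdahlDecay (M r / r) (scaledPressure A (u r) r) / r)) (Icc 1 R) r := by
  have hr0 : r ≠ 0 := (one_pos.trans_le hr.1).ne'
  have hx0 : 1 - M r / r ≠ 0 := (sub_pos.2 (h.compactness_lt_one hr)).ne'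
  have hx := h.hasDerivWithinAt_compactness hr
  convert! ((((hx.const_mul 3).const_sub 4).add (h.hasDerivWithinAt_scaledPressure hr)).pow 2).div
    (hx.const_sub 1) hx0 using 1
  simp only [Pi.pow_apply, Pi.add_apply, buchdahlDecay]
  generalize M r / r = x at *
  generalize scaledPressure A (u r) r = Y
  field_simp
  ring

theorem buchdahlFn_one (h : IsShellProfile A u M R) :
    buchdahlFn (M 1 / 1) (scaledPressure A (u 1) 1) = 16 := by
  rw [h.mass_one, h.ratio_one, scaledPressure_one, buchdahlFn]
  norm_num

theorem buchdahlFn_le (h : IsShellProfile A u M R) (hA : 0 ≤ A) (hr : r ∈ Icc 1 R) :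
    buchdahlFn (M r / r) (scaledPressure A (u r) r) ≤ 16 :=
  le_of_hasDerivWithinAt_nonpos_of_le (fun _ hs => h.hasDerivWithinAt_buchdahlFn hs)
    h.buchdahlFn_one.le
    (fun _ hs hW => neg_nonpos.2 (div_nonneg
      (buchdahlDecay_nonneg_of_le_buchdahlFn (h.compactness_lt_one hs)
        (h.scaledPressure_nonneg hA hs) hW)
      (zero_le_one.trans hs.1))) hr

theorem scaledPressure_le (h : IsShellProfile A u M R) (hA : 0 ≤ A) (hr : r ∈ Icc 1 R) :
    scaledPressure A (u r) r ≤ 1 / 3 :=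
  pressure_le_of_buchdahlFn_le (h.compactness_lt_one hr) (h.buchdahlFn_le hA hr)

theorem compactness_le (h : IsShellProfile A u M R) (hA : 0 ≤ A) (hr : r ∈ Icc 1 R) :
    M r / r ≤ 8 / 9 :=
  compactness_le_of_buchdahlFn_le (h.compactness_lt_one hr) (h.scaledPressure_nonneg hA hr)
    (h.buchdahlFn_le hA hr)

-- Equality forces `Y = 0`, so `W` would attain its maximum `16` while strictly decreasing.
theorem compactness_lt (h : IsShellProfile A u M R) (hA : 0 ≤ A) (hr : r ∈ Icc 1 R) :
    M r / r < 8 / 9 := by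
  refine (h.compactness_le hA hr).lt_of_ne fun hx => ?_
  have hr1 : 1 < r := hr.1.lt_of_ne fun h1 => by
    rw [← h1, h.mass_one] at hx
    norm_num at hx
  have hY : scaledPressure A (u r) r = 0 := by
    have hsq := sq_le_of_buchdahlFn_le (h.compactness_lt_one hr) (h.buchdahlFn_le hA hr)
    rw [hx] at hsq
    nlinarith [h.scaledPressure_nonneg hA hr]
  have hmax : buchdahlFn (M r / r) (scaledPressure A (u r) r) = 16 := by
    rw [hx, hY, buchdahlFn]
    norm_num
  have hr' := h.restrict hr
  have hnonneg := hasDerivWithinAt_nonneg_of_isMaxOn_right hr1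
    (hr'.hasDerivWithinAt_buchdahlFn hr'.radius_mem)
    (fun s hs => (hr'.buchdahlFn_le hA hs).trans hmax.ge)
  have hpos : 0 < buchdahlDecay (M r / r) (scaledPressure A (u r) r) := by
    rw [hx, hY, buchdahlDecay]
    norm_num
  linarith [div_pos hpos (one_pos.trans hr1)]

theorem le_buchdahlFn (h : IsShellProfile A u M R) (hA : 0 ≤ A) (hr : r ∈ Icc 1 R) :
    16 - 500 * (r - 1) ≤ buchdahlFn (M r / r) (scaledPressure A (u r) r) := by
  have hr' := h.restrict hr
  have := mul_sub_le_sub_of_le_hasDerivWithinAt (c := -500) hr.1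
    (fun s hs => hr'.hasDerivWithinAt_buchdahlFn hs) fun s hs => neg_le_neg <| by
      have hs0 : 0 < s := one_pos.trans_le hs.1
      have := buchdahlDecay_le (hr'.compactness_nonneg hA hs) (hr'.compactness_le hA hs)
        (hr'.scaledPressure_nonneg hA hs) (hr'.scaledPressure_le hA hs)
      rw [div_le_iff₀ hs0]
      linarith [hs.1]
  linarith [h.buchdahlFn_one]

end IsShellProfile

/-! ### Large amplitudes give thin shells -/

section Pointwise

variable {A u r x Y M : ℝ}

theorem le_growthRate (hu : 1 ≤ u) (hr : 1 ≤ r) (hr' : r ≤ 5 / 4) (hM : M ≤ 1 / 3)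
    (hY : scaledPressure A u r ≤ 1 / 3) : 2 / 5 ≤ growthRate A r u M := by
  have hr0 : 0 < r := one_pos.trans_le hr
  have hx : M / r ≤ 1 / 3 := by
    rw [div_le_iff₀ hr0]
    linarith
  have hdrag : (M / r + scaledPressure A u r) / (2 * (1 - M / r)) ≤ 1 / 2 := by
    rw [div_le_iff₀ (by linarith)]
    linarith
  have hur : 4 / 5 ≤ u / r := by
    rw [le_div_iff₀ hr0]
    linarith
  calc (2 / 5 : ℝ) = 4 / 5 * (1 / 2) := by norm_num
    _ ≤ growthRate A r u M := mul_le_mul hur (by linarith) (by norm_num) (by linarith)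

theorem growthRate_le (hu : 1 ≤ u) (hr : 1 ≤ r) (hr' : r ≤ 2) (hx : 43 / 50 ≤ M / r)
    (hx' : M / r < 1) (hY : 0 ≤ scaledPressure A u r) : growthRate A r u M ≤ -1 := by
  have hr0 : 0 < r := one_pos.trans_le hr
  have hdrag : 3 ≤ (M / r + scaledPressure A u r) / (2 * (1 - M / r)) := by
    rw [le_div_iff₀ (by linarith)]
    linarith
  have hur : 1 / 2 ≤ u / r := by
    rw [le_div_iff₀ hr0]
    linarith
  unfold growthRate
  nlinarith

theorem le_pressure_of_le_buchdahlFn (hx : 33 / 100 ≤ x) (hx' : x ≤ 87 / 100) (hY : 0 ≤ Y)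
    (hW : 159 / 10 ≤ buchdahlFn x Y) : 1 / 100 ≤ Y := by
  rw [buchdahlFn, le_div_iff₀ (by linarith)] at hW
  by_contra! hlt
  nlinarith [mul_nonneg (sub_nonneg.2 hx) (sub_nonneg.2 hx')]

theorem lt_compactness_of_le_buchdahlFn (hx : 2 / 3 ≤ x) (hx' : x < 1)
    (hW : 159 / 10 ≤ buchdahlFn x 0) : 4 / 5 < x := by
  rw [buchdahlFn, le_div_iff₀ (by linarith)] at hW
  nlinarith

end Pointwise

namespace IsShellProfile

variable {A R r : ℝ} {u M : ℝ → ℝ}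

theorem ratio_le (h : IsShellProfile A u M R) (hA : 10 ^ 14 ≤ A) (hr : r ∈ Icc 1 R)
    (hr' : r ≤ 3 / 2) : u r ≤ 1 + 1 / 10 ^ 7 := by
  have hA0 : 0 ≤ A := le_trans (by norm_num) hA
  have hu := h.one_le_ratio r hr
  have hsq := mul_sq_sub_one_le_of_scaledPressure_le hA0 hu (one_pos.trans_le hr.1)
    (h.scaledPressure_le hA0 hr)
  have hr2 : r ^ 2 ≤ (3 / 2) ^ 2 := pow_le_pow_left₀ (zero_le_one.trans hr.1) hr' 2
  have hsmall : (u r - 1) ^ 2 ≤ (1 / 10 ^ 7) ^ 2 := by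
    nlinarith [mul_le_mul_of_nonneg_right hA (sq_nonneg (u r - 1))]
  linarith [(abs_le_of_sq_le_sq' hsmall (by positivity)).2]

theorem mul_scaledPressure_le_scaledDensity (h : IsShellProfile A u M R) (hA : 10 ^ 14 ≤ A)
    (hr : r ∈ Icc 1 R) (hr' : r ≤ 3 / 2) :
    2 * 10 ^ 7 * scaledPressure A (u r) r ≤ scaledDensity A (u r) r := by
  have hA0 : 0 ≤ A := le_trans (by norm_num) hA
  have hu := h.one_le_ratio r hr
  have hdens : (u r - 1) * scaledDensity A (u r) r ≤ 1 / 10 ^ 7 * scaledDensity A (u r) r :=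
    mul_le_mul_of_nonneg_right (by linarith [h.ratio_le hA hr hr']) (scaledDensity_nonneg hA0 hu)
  linarith [two_mul_scaledPressure_le (r := r) hA0 hu]

-- Three stages of length `10⁻⁵` bound the thickness of the shell. As `u` is confined to
-- `[1, 1 + 10⁻⁷]`, it cannot grow at rate `2/5` throughout the first stage, so mass must build up.
-- In the second stage `W ≈ 16` forces `Y ≥ 1/100` unless the mass is large already, and the density
-- exceeds `Y` by a factor `2 * 10⁷`. In the third stage `u` decreases at rate at least `1`.
theorem one_third_le_mass (hA : 10 ^ 14 ≤ A) (h : IsShellProfile A u M (1 + 1 / 10 ^ 5)) :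
    1 / 3 ≤ M (1 + 1 / 10 ^ 5) := by
  have hA0 : 0 ≤ A := le_trans (by norm_num) hA
  by_contra! hM
  have hgrow := mul_sub_le_sub_of_le_hasDerivWithinAt h.one_le_radius h.hasDerivWithinAt_ratio
    fun s hs => le_growthRate (h.one_le_ratio s hs) hs.1 (hs.2.trans (by norm_num))
      ((h.monotoneOn_mass hA0 hs h.radius_mem hs.2).trans hM.le) (h.scaledPressure_le hA0 hs)
  linarith [h.ratio_one, h.ratio_le hA h.radius_mem (by norm_num)]

theorem le_mass (hA : 10 ^ 14 ≤ A) (h : IsShellProfile A u M (1 + 2 / 10 ^ 5)) :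
    87 / 100 ≤ M (1 + 2 / 10 ^ 5) := by
  have hA0 : 0 ≤ A := le_trans (by norm_num) hA
  have hmid : (1 + 1 / 10 ^ 5 : ℝ) ∈ Icc 1 (1 + 2 / 10 ^ 5) := by constructor <;> norm_num
  have hsub : Icc (1 + 1 / 10 ^ 5 : ℝ) (1 + 2 / 10 ^ 5) ⊆ Icc 1 (1 + 2 / 10 ^ 5) :=
    Icc_subset_Icc_left hmid.1
  have hstart := (h.restrict hmid).one_third_le_mass hA
  by_contra! hM
  have hdensity : ∀ s ∈ Icc (1 + 1 / 10 ^ 5 : ℝ) (1 + 2 / 10 ^ 5),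
      2 * 10 ^ 5 ≤ scaledDensity A (u s) s := by
    intro s hs
    have hs' := hsub hs
    have hs0 : 0 < s := one_pos.trans_le hs'.1
    have hMs : 1 / 3 ≤ M s := hstart.trans (h.monotoneOn_mass hA0 hmid hs' hs.1)
    have hMs' : M s ≤ 87 / 100 := (h.monotoneOn_mass hA0 hs' h.radius_mem hs.2).trans hM.le
    have hY : 1 / 100 ≤ scaledPressure A (u s) s :=
      le_pressure_of_le_buchdahlFn (x := M s / s)
        (by rw [le_div_iff₀ hs0]; linarith [hs.2])
        (by rw [div_le_iff₀ hs0]; linarith [hs'.1])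
        (h.scaledPressure_nonneg hA0 hs')
        (le_trans (by linarith [hs.2]) (h.le_buchdahlFn hA0 hs'))
    linarith [h.mul_scaledPressure_le_scaledDensity hA hs' (hs.2.trans (by norm_num))]
  have hgrow := mul_sub_le_sub_of_le_hasDerivWithinAt (by norm_num)
    (fun s hs => (h.hasDerivWithinAt_mass s (hsub hs)).mono hsub) hdensity
  linarith

theorem not_isShellProfile_of_large_amplitude (hA : 10 ^ 14 ≤ A) :
    ¬ IsShellProfile A u M (1 + 3 / 10 ^ 5) := by
  intro h
  have hA0 : 0 ≤ A := le_trans (by norm_num) hA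
  have hmid : (1 + 2 / 10 ^ 5 : ℝ) ∈ Icc 1 (1 + 3 / 10 ^ 5) := by constructor <;> norm_num
  have hsub : Icc (1 + 2 / 10 ^ 5 : ℝ) (1 + 3 / 10 ^ 5) ⊆ Icc 1 (1 + 3 / 10 ^ 5) :=
    Icc_subset_Icc_left hmid.1
  have hstart := (h.restrict hmid).le_mass hA
  have hdecay := sub_le_mul_sub_of_hasDerivWithinAt_le (c := -1) (by norm_num)
    (fun s hs => (h.hasDerivWithinAt_ratio s (hsub hs)).mono hsub) fun s hs => by
      have hs' := hsub hs
      have hMs : 87 / 100 ≤ M s := hstart.trans (h.monotoneOn_mass hA0 hmid hs' hs.1)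
      exact growthRate_le (h.one_le_ratio s hs') hs'.1 (hs.2.trans (by norm_num))
        (by rw [le_div_iff₀ (one_pos.trans_le hs'.1)]; linarith [hs.2])
        (h.compactness_lt_one hs') (h.scaledPressure_nonneg hA0 hs')
  linarith [h.one_le_ratio _ h.radius_mem, h.ratio_le hA hmid (by norm_num)]

theorem radius_lt (h : IsShellProfile A u M R) (hA : 10 ^ 14 ≤ A) : R < 1 + 3 / 10 ^ 5 := by
  by_contra! hR
  exact not_isShellProfile_of_large_amplitude hA (h.restrict ⟨by norm_num, hR⟩)

end IsShellProfile

/-- A shell profile whose matter ends at radius `R`, where `u` returns to `1`. -/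
structure IsClosedShellProfile (A : ℝ) (u M : ℝ → ℝ) (R : ℝ) : Prop
    extends IsShellProfile A u M R where
  one_lt_radius : 1 < R
  ratio_radius : u R = 1
  one_lt_ratio : ∀ r ∈ Ioo 1 R, 1 < u r

theorem IsClosedShellProfile.lt_compactness_radius {A R : ℝ} {u M : ℝ → ℝ}
    (h : IsClosedShellProfile A u M R) (hA : 10 ^ 14 ≤ A) : 4 / 5 < M R / R := by
  have hA0 : 0 ≤ A := le_trans (by norm_num) hA
  have hR0 : 0 < R := one_pos.trans h.one_lt_radius
  have hx := h.compactness_lt_one h.radius_mem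
  have hW := h.le_buchdahlFn hA0 h.radius_mem
  have hgrowth := hasDerivWithinAt_nonneg_of_isMaxOn_right h.one_lt_radius
    (h.hasDerivWithinAt_ratio R h.radius_mem).neg
    fun r hr => neg_le_neg (h.ratio_radius.trans_le (h.one_le_ratio r hr))
  rw [growthRate, h.ratio_radius, scaledPressure_one, add_zero, neg_nonneg] at hgrowth
  rw [h.ratio_radius, scaledPressure_one] at hW
  have hdrag : 1 ≤ M R / R / (2 * (1 - M R / R)) :=
    sub_nonpos.1 (nonpos_of_mul_nonpos_right hgrowth (by positivity))
  rw [le_div_iff₀ (by linarith)] at hdrag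
  exact lt_compactness_of_le_buchdahlFn (by linarith) hx (by linarith [h.radius_lt hA])

/-! ### Existence of closed profiles -/

theorem contDiffOn_shellField (A : ℝ) :
    ContDiffOn ℝ 1 (fun p : ℝ × ℝ × ℝ =>
      (growthRate A p.1 p.2.1 p.2.2, scaledDensity A p.2.1 p.1)) {p | 0 < p.1 ∧ p.2.2 < p.1} := by
  have hr : ∀ p ∈ {p : ℝ × ℝ × ℝ | 0 < p.1 ∧ p.2.2 < p.1}, p.1 ≠ 0 := fun p hp => hp.1.ne'
  have hr2 : ∀ p ∈ {p : ℝ × ℝ × ℝ | 0 < p.1 ∧ p.2.2 < p.1}, p.1 ^ 2 ≠ 0 :=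
    fun p hp => pow_ne_zero 2 (hr p hp)
  have hx : ∀ p ∈ {p : ℝ × ℝ × ℝ | 0 < p.1 ∧ p.2.2 < p.1}, 2 * (1 - p.2.2 / p.1) ≠ 0 :=
    fun p hp => (mul_pos two_pos (sub_pos.2 ((div_lt_one hp.1).2 hp.2))).ne'
  have hMr : ContDiffOn ℝ 1 (fun p : ℝ × ℝ × ℝ => p.2.2 / p.1) {p | 0 < p.1 ∧ p.2.2 < p.1} :=
    ContDiffOn.div (by fun_prop) (by fun_prop) hr
  unfold growthRate scaledPressure scaledDensity
  refine ContDiffOn.prodMk ?_ (ContDiffOn.div (by fun_prop) (by fun_prop) hr2)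
  exact (ContDiffOn.div (by fun_prop) (by fun_prop) hr).mul (contDiffOn_const.sub
    ((hMr.add (ContDiffOn.div (by fun_prop) (by fun_prop) hr2)).div
      (contDiffOn_const.mul (contDiffOn_const.sub hMr)) hx))

/-- A compact set of values `(u, M)` on which the shell equations are regular for `r ≥ 1`, and
whose boundary the shell profiles of large amplitude do not reach. -/
def shellBox : Set (ℝ × ℝ) :=
  Icc (1 / 2) 2 ×ˢ Icc (-1) (19 / 20)

theorem IsShellProfile.mem_interior_shellBox {A R : ℝ} {u M : ℝ → ℝ} (h : IsShellProfile A u M R)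
    (hA : 10 ^ 14 ≤ A) : (u R, M R) ∈ interior shellBox := by
  have hA0 : 0 ≤ A := le_trans (by norm_num) hA
  have hR := h.radius_lt hA
  have hx := h.compactness_le hA0 h.radius_mem
  rw [div_le_iff₀ (one_pos.trans_le h.one_le_radius)] at hx
  rw [shellBox, interior_prod_eq, interior_Icc, interior_Icc]
  exact ⟨⟨by linarith [h.one_le_ratio R h.radius_mem],
    by linarith [h.ratio_le hA h.radius_mem (by linarith)]⟩,
    ⟨by linarith [h.mass_nonneg hA0 h.radius_mem], by linarith⟩⟩

theorem exists_shell_while_mem_shellBox (A : ℝ) {T : ℝ} (hT : 1 ≤ T) :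
    ∃ u M : ℝ → ℝ, u 1 = 1 ∧ M 1 = 0 ∧ ContinuousOn (fun r => (u r, M r)) (Icc 1 T) ∧
      ∀ r ∈ Icc 1 T, (u r, M r) ∈ shellBox →
        HasDerivWithinAt u (growthRate A r (u r) (M r)) (Icc 1 T) r ∧
        HasDerivWithinAt M (scaledDensity A (u r) r) (Icc 1 T) r := by
  have h₁ : (1 / 2 : ℝ) ≤ 2 := by norm_num
  have h₂ : (-1 : ℝ) ≤ 19 / 20 := by norm_num
  obtain ⟨z, hz, hcont, hderiv⟩ := exists_hasDerivWithinAt_while_mem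
    (P := fun z => ((projIcc (1 / 2 : ℝ) 2 h₁ z.1 : ℝ), (projIcc (-1 : ℝ) (19 / 20) h₂ z.2 : ℝ)))
    hT (isCompact_Icc.prod isCompact_Icc) ((convex_Icc _ _).prod (convex_Icc _ _))
    (fun z => ⟨Subtype.prop _, Subtype.prop _⟩)
    (fun z hz => Prod.ext (by simp only [projIcc_of_mem h₁ hz.1])
      (by simp only [projIcc_of_mem h₂ hz.2]))
    (((LipschitzWith.subtype_val _).comp ((LipschitzWith.projIcc h₁).comp .prod_fst)).prodMk
      ((LipschitzWith.subtype_val _).comp ((LipschitzWith.projIcc h₂).comp .prod_snd)))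
    ((contDiffOn_shellField A).mono fun p hp =>
      ⟨one_pos.trans_le hp.1.1, hp.2.2.2.trans_lt (by linarith [hp.1.1])⟩) ((1, 0) : ℝ × ℝ)
  exact ⟨fun r => (z r).1, fun r => (z r).2, by simp only [hz], by simp only [hz], hcont,
    fun r hr hbox => ⟨(hderiv r hr hbox).fst, (hderiv r hr hbox).snd⟩⟩

theorem exists_isClosedShellProfile {A : ℝ} (hA : 10 ^ 14 ≤ A) :
    ∃ (u M : ℝ → ℝ) (R : ℝ), IsClosedShellProfile A u M R := by
  set T : ℝ := 1 + 3 / 10 ^ 5 with hTdef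
  have hT : 1 < T := by norm_num [hTdef]
  obtain ⟨u, M, hu1, hM1, hcont, hderiv⟩ := exists_shell_while_mem_shellBox A hT.le
  have hstart : (u 1, M 1) ∈ shellBox := by
    rw [hu1, hM1]
    constructor <;> norm_num
  have hrate : 0 < growthRate A 1 (u 1) (M 1) := by
    simp [growthRate, hu1, hM1, scaledPressure_one]
  obtain ⟨R, hR, habove, hreturn⟩ := exists_first_return hT hcont.fst
    (hderiv 1 ⟨le_rfl, hT.le⟩ hstart).1 hrate
  rw [hu1] at habove hreturn
  have hu : ∀ r ∈ Icc 1 R, 1 ≤ u r := by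
    intro r hr
    rcases hr.1.eq_or_lt with rfl | h1r
    · exact hu1.ge
    rcases hr.2.eq_or_lt with rfl | hrR
    · exact hreturn.elim ge_of_eq fun h => h.1 ▸ h.2.le
    · exact (habove r ⟨h1r, hrR⟩).le
  have hprofile : ∀ r ∈ Icc 1 R, (∀ t ∈ Icc 1 r, (u t, M t) ∈ shellBox) →
      IsShellProfile A u M r := by
    intro r hr hmem
    have hsub : Icc 1 r ⊆ Icc 1 T := Icc_subset_Icc_right (hr.2.trans hR.2)
    exact ⟨hr.1, fun t ht => (hderiv t (hsub ht) (hmem t ht)).1.mono hsub,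
      fun t ht => (hderiv t (hsub ht) (hmem t ht)).2.mono hsub, hu1, hM1,
      fun t ht => hu t ⟨ht.1, ht.2.trans hr.2⟩,
      fun t ht => (hmem t ht).2.2.trans_lt (by linarith [ht.1])⟩
  have hinside : ∀ r ∈ Icc 1 R, (u r, M r) ∈ interior shellBox :=
    forall_mem_of_bootstrap (hcont.mono (Icc_subset_Icc_right hR.2)) isOpen_interior
      (isClosed_Icc.prod isClosed_Icc) interior_subset hstart
      fun r hr hmem => (hprofile r hr hmem).mem_interior_shellBox hA
  have h : IsShellProfile A u M R :=
    hprofile R ⟨hR.1.le, le_rfl⟩ fun t ht => interior_subset (hinside t ht)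
  exact ⟨u, M, R, h, hR.1, hreturn.resolve_right fun hRT => (h.radius_lt hA).ne hRT.1, habove⟩

/-! ### Profiles as solutions of the field equation -/

namespace IsClosedShellProfile

variable {A R r lam : ℝ} {u M : ℝ → ℝ}

/-- The energy density of a profile, zero outside the support of the matter. -/
noncomputable def density (h : IsClosedShellProfile A u M R) (r : ℝ) : ℝ :=
  clampExtend h.one_le_radius (fun s => scaledDensity A (u s) s) r / (8 * π * r ^ 2)

/-- The radial pressure of a profile, zero outside the support of the matter. -/
noncomputable def pressure (h : IsClosedShellProfile A u M R) (r : ℝ) : ℝ :=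
  clampExtend h.one_le_radius (fun s => scaledPressure A (u s) s) r / (8 * π * r ^ 2)

/-- The Hawking mass of a profile, continued by constants outside the support of the matter. -/
noncomputable def mass (h : IsClosedShellProfile A u M R) (r : ℝ) : ℝ :=
  clampExtend h.one_le_radius M r / 2

/-- The right-hand side of the field equation for `y`. -/
noncomputable def slope (h : IsClosedShellProfile A u M R) (r : ℝ) : ℝ :=
  -(1 - 2 * h.mass r / r)⁻¹ * (4 * π * r * h.pressure r + h.mass r / r ^ 2)

/-- The solution `y` of the field equation whose value at the centre is `log lam`. -/
noncomputable def potential (h : IsClosedShellProfile A u M R) (lam r : ℝ) : ℝ :=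
  log lam + ∫ s in (1 : ℝ)..r, h.slope s

theorem density_of_le_one (h : IsClosedShellProfile A u M R) (hr : r ≤ 1) : h.density r = 0 := by
  rw [density, clampExtend_of_le_left _ hr, h.ratio_one, scaledDensity_one, zero_div]

theorem density_of_radius_le (h : IsClosedShellProfile A u M R) (hr : R ≤ r) :
    h.density r = 0 := by
  rw [density, clampExtend_of_right_le _ hr, h.ratio_radius, scaledDensity_one, zero_div]

theorem density_of_mem (h : IsClosedShellProfile A u M R) (hr : r ∈ Icc 1 R) :
    h.density r = scaledDensity A (u r) r / (8 * π * r ^ 2) := by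
  rw [density, clampExtend_of_mem _ hr]

theorem density_pos (h : IsClosedShellProfile A u M R) (hA : 0 < A) (hr : r ∈ Ioo 1 R) :
    0 < h.density r := by
  have hr0 : 0 < r := one_pos.trans hr.1
  have hu : 0 < u r ^ 3 - 1 := sub_pos.2 (one_lt_pow₀ (h.one_lt_ratio r hr) three_ne_zero)
  rw [h.density_of_mem (Ioo_subset_Icc_self hr), scaledDensity]
  positivity

theorem pressure_of_le_one (h : IsClosedShellProfile A u M R) (hr : r ≤ 1) :
    h.pressure r = 0 := by
  rw [pressure, clampExtend_of_le_left _ hr, h.ratio_one, scaledPressure_one, zero_div]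

theorem pressure_of_radius_le (h : IsClosedShellProfile A u M R) (hr : R ≤ r) :
    h.pressure r = 0 := by
  rw [pressure, clampExtend_of_right_le _ hr, h.ratio_radius, scaledPressure_one, zero_div]

theorem pressure_of_mem (h : IsClosedShellProfile A u M R) (hr : r ∈ Icc 1 R) :
    h.pressure r = scaledPressure A (u r) r / (8 * π * r ^ 2) := by
  rw [pressure, clampExtend_of_mem _ hr]

theorem mass_of_le_one (h : IsClosedShellProfile A u M R) (hr : r ≤ 1) : h.mass r = 0 := by
  rw [mass, clampExtend_of_le_left _ hr, h.mass_one, zero_div]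

theorem mass_of_radius_le (h : IsClosedShellProfile A u M R) (hr : R ≤ r) :
    h.mass r = M R / 2 := by
  rw [mass, clampExtend_of_right_le _ hr]

theorem mass_of_mem (h : IsClosedShellProfile A u M R) (hr : r ∈ Icc 1 R) :
    h.mass r = M r / 2 := by
  rw [mass, clampExtend_of_mem _ hr]

theorem continuousOn_scaledDensity (h : IsClosedShellProfile A u M R) :
    ContinuousOn (fun r => scaledDensity A (u r) r) (Icc 1 R) := by
  have hu : ContinuousOn u (Icc 1 R) := fun r hr =>
    (h.hasDerivWithinAt_ratio r hr).continuousWithinAt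
  unfold scaledDensity
  exact ContinuousOn.div (by fun_prop) (by fun_prop) fun r hr =>
    pow_ne_zero 2 (one_pos.trans_le hr.1).ne'

theorem continuousOn_scaledPressure (h : IsClosedShellProfile A u M R) :
    ContinuousOn (fun r => scaledPressure A (u r) r) (Icc 1 R) :=
  fun _ hr => (h.hasDerivWithinAt_scaledPressure hr).continuousWithinAt

theorem mass_eq_integral_density (h : IsClosedShellProfile A u M R) (r : ℝ) :
    h.mass r = 4 * π * ∫ s in Ioc 0 r, s ^ 2 * h.density s := by
  have hR := h.one_le_radius
  rcases le_total r 0 with hr | hr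
  · rw [Ioc_eq_empty hr.not_gt, setIntegral_empty, mul_zero,
      h.mass_of_le_one (hr.trans zero_le_one)]
  have hderiv := hasDerivAt_clampExtend hR h.hasDerivWithinAt_mass
    (by rw [h.ratio_one, scaledDensity_one]) (by rw [h.ratio_radius, scaledDensity_one])
  have hint := intervalIntegral.integral_eq_sub_of_hasDerivAt (a := 0) (b := r)
    (fun s _ => hderiv s)
    ((continuous_clampExtend hR h.continuousOn_scaledDensity).intervalIntegrable _ _)
  rw [clampExtend_of_le_left hR zero_le_one, h.mass_one, sub_zero,
    intervalIntegral.integral_of_le hr] at hint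
  have hdens : ∀ s ∈ Ioc 0 r, s ^ 2 * h.density s
      = (8 * π)⁻¹ * clampExtend hR (fun s => scaledDensity A (u s) s) s := fun s hs => by
    have : s ≠ 0 := hs.1.ne'
    rw [density]
    field_simp
  rw [setIntegral_congr_fun measurableSet_Ioc hdens, integral_const_mul, hint, mass]
  field_simp
  ring

theorem exists_compactness_le (h : IsClosedShellProfile A u M R) (hA : 0 ≤ A) (r : ℝ) :
    ∃ s ∈ Icc 1 R, 2 * h.mass r / r ≤ M s / s := by
  rcases le_total r 1 with hr1 | hr1
  · exact ⟨1, h.one_mem, by rw [h.mass_of_le_one hr1, h.mass_one]; simp⟩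
  rcases le_total r R with hrR | hrR
  · exact ⟨r, ⟨hr1, hrR⟩, by rw [h.mass_of_mem ⟨hr1, hrR⟩, mul_div_cancel₀ _ two_ne_zero]⟩
  · refine ⟨R, h.radius_mem, ?_⟩
    rw [h.mass_of_radius_le hrR, mul_div_cancel₀ _ two_ne_zero]
    exact div_le_div_of_nonneg_left (h.mass_nonneg hA h.radius_mem)
      (one_pos.trans h.one_lt_radius) hrR

theorem two_mul_mass_div_lt_one (h : IsClosedShellProfile A u M R) (hA : 0 ≤ A) (r : ℝ) :
    2 * h.mass r / r < 1 := by
  obtain ⟨s, hs, hle⟩ := h.exists_compactness_le hA r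
  exact hle.trans_lt (h.compactness_lt_one hs)

theorem exists_isMaxOn_compactness (h : IsClosedShellProfile A u M R) :
    ∃ s ∈ Icc 1 R, ∀ r ∈ Icc 1 R, M r / r ≤ M s / s :=
  isCompact_Icc.exists_isMaxOn (nonempty_Icc.2 h.one_le_radius) fun _ hr =>
    (h.hasDerivWithinAt_compactness hr).continuousWithinAt

theorem bddAbove_compactness (h : IsClosedShellProfile A u M R) (hA : 0 ≤ A) :
    BddAbove (range fun r : {t : ℝ // 0 < t} => 2 * h.mass r / r) :=
  ⟨1, forall_mem_range.2 fun r => (h.two_mul_mass_div_lt_one hA r).le⟩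

theorem lt_iSup_compactness (h : IsClosedShellProfile A u M R) (hA : 10 ^ 14 ≤ A) :
    4 / 5 < ⨆ r : {t : ℝ // 0 < t}, 2 * h.mass r / r := by
  refine (h.lt_compactness_radius hA).trans_le ?_
  have hle := le_ciSup (h.bddAbove_compactness (le_trans (by norm_num) hA))
    ⟨R, one_pos.trans h.one_lt_radius⟩
  rwa [h.mass_of_radius_le le_rfl, mul_div_cancel₀ _ two_ne_zero] at hle

theorem iSup_compactness_lt (h : IsClosedShellProfile A u M R) (hA : 0 ≤ A) :
    ⨆ r : {t : ℝ // 0 < t}, 2 * h.mass r / r < 8 / 9 := by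
  have : Nonempty {t : ℝ // 0 < t} := ⟨⟨1, one_pos⟩⟩
  obtain ⟨s, hs, hmax⟩ := h.exists_isMaxOn_compactness
  refine (ciSup_le fun r => ?_).trans_lt (h.compactness_lt hA hs)
  obtain ⟨t, ht, hle⟩ := h.exists_compactness_le hA r
  exact hle.trans (hmax t ht)

theorem slope_of_le_one (h : IsClosedShellProfile A u M R) (hr : r ≤ 1) : h.slope r = 0 := by
  rw [slope, h.mass_of_le_one hr, h.pressure_of_le_one hr]
  simp

theorem continuous_slope (h : IsClosedShellProfile A u M R) (hA : 0 ≤ A) :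
    Continuous h.slope := by
  rw [continuous_iff_continuousAt]
  intro r
  rcases lt_or_ge r 1 with hr | hr
  · exact continuousAt_const.congr
      ((eventually_lt_nhds hr).mono fun s hs => (h.slope_of_le_one (le_of_lt hs)).symm)
  have hr0 : r ≠ 0 := (one_pos.trans_le hr).ne'
  have hmass : Continuous h.mass := (continuous_clampExtend h.one_le_radius fun s hs =>
    (h.hasDerivWithinAt_mass s hs).continuousWithinAt).div_const 2
  have hpressure : ContinuousAt h.pressure r :=
    (continuous_clampExtend h.one_le_radius h.continuousOn_scaledPressure).continuousAt.div
      (by fun_prop) (by positivity)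
  have hx : 1 - 2 * h.mass r / r ≠ 0 := (sub_pos.2 (h.two_mul_mass_div_lt_one hA r)).ne'
  unfold slope
  fun_prop (disch := positivity)

theorem hasDerivAt_potential (h : IsClosedShellProfile A u M R) (hA : 0 ≤ A) (lam r : ℝ) :
    HasDerivAt (h.potential lam) (h.slope r) r :=
  have hg := h.continuous_slope hA
  (intervalIntegral.integral_hasDerivAt_right (hg.intervalIntegrable _ _)
    (hg.stronglyMeasurableAtFilter _ _) hg.continuousAt).const_add _

theorem contDiff_potential (h : IsClosedShellProfile A u M R) (hA : 0 ≤ A) (lam : ℝ) :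
    ContDiff ℝ 1 (h.potential lam) := by
  have hderiv : deriv (h.potential lam) = h.slope :=
    funext fun r => (h.hasDerivAt_potential hA lam r).deriv
  exact contDiff_one_iff_deriv.2
    ⟨fun r => (h.hasDerivAt_potential hA lam r).differentiableAt, hderiv ▸ h.continuous_slope hA⟩

theorem potential_sub_potential (h : IsClosedShellProfile A u M R) (hA : 0 ≤ A) {f : ℝ → ℝ}
    {a b : ℝ} (hab : a ≤ b) (hf : ContinuousOn f (Icc a b))
    (hf' : ∀ r ∈ Ioo a b, HasDerivAt f (h.slope r) r) (lam : ℝ) :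
    h.potential lam b - h.potential lam a = f b - f a := by
  have hint := (h.continuous_slope hA).intervalIntegrable (μ := volume)
  rw [← intervalIntegral.integral_eq_sub_of_hasDerivAt_of_le hab hf hf' (hint a b), potential,
    potential, add_sub_add_left_eq_sub,
    intervalIntegral.integral_interval_sub_left (hint 1 b) (hint 1 a)]

theorem potential_of_le_one (h : IsClosedShellProfile A u M R) (lam : ℝ) (hr : r ≤ 1) :
    h.potential lam r = log lam := by
  have hzero : ∀ s ∈ uIcc 1 r, h.slope s = 0 := fun s hs =>
    h.slope_of_le_one ((uIcc_of_ge hr).subset hs).2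
  rw [potential, intervalIntegral.integral_congr (g := fun _ => 0) hzero,
    intervalIntegral.integral_zero, add_zero]

theorem hasDerivWithinAt_log_ratio_div (h : IsClosedShellProfile A u M R) (hr : r ∈ Icc 1 R) :
    HasDerivWithinAt (fun s => log (u s / s)) (h.slope r) (Icc 1 R) r := by
  have hr0 : 0 < r := one_pos.trans_le hr.1
  have hu : 0 < u r := one_pos.trans_le (h.one_le_ratio r hr)
  have hx : 1 - M r / r ≠ 0 := (sub_pos.2 (h.compactness_lt_one hr)).ne'
  have hlog := ((h.hasDerivWithinAt_ratio r hr).div (hasDerivWithinAt_id r _) hr0.ne').log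
    (div_pos hu hr0).ne'
  convert! hlog using 1
  rw [slope, h.mass_of_mem hr, h.pressure_of_mem hr, growthRate, mul_div_cancel₀ _ two_ne_zero]
  simp only [Pi.div_apply, id]
  generalize scaledPressure A (u r) r = Y
  generalize hz : M r / r = z at *
  rw [show M r = z * r by rw [← hz, div_mul_cancel₀ _ hr0.ne']]
  field_simp
  ring

theorem exp_potential (h : IsClosedShellProfile A u M R) (hA : 0 ≤ A) (hlam : 0 < lam)
    (hr : r ∈ Icc 1 R) : exp (h.potential lam r) = lam * u r / r := by
  have hsub : Icc 1 r ⊆ Icc 1 R := Icc_subset_Icc_right hr.2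
  have hpos : 0 < u r / r :=
    div_pos (one_pos.trans_le (h.one_le_ratio r hr)) (one_pos.trans_le hr.1)
  have hdiff := h.potential_sub_potential hA (f := fun s => log (u s / s)) hr.1
    (fun s hs => ((h.hasDerivWithinAt_log_ratio_div (hsub hs)).mono hsub).continuousWithinAt)
    (fun s hs => (h.hasDerivWithinAt_log_ratio_div (hsub (Ioo_subset_Icc_self hs))).hasDerivAt
      (Icc_mem_nhds hs.1 (hs.2.trans_le hr.2))) lam
  rw [h.potential_of_le_one lam le_rfl, h.ratio_one, div_one, log_one, sub_zero] at hdiff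
  rw [sub_eq_iff_eq_add.1 hdiff, exp_add, exp_log hpos, exp_log hlam]
  ring

theorem hasDerivAt_log_schwarzschild (h : IsClosedShellProfile A u M R) (hA : 0 ≤ A)
    (hr : R ≤ r) : HasDerivAt (fun s => -(1 / 2) * log (1 - M R / s)) (h.slope r) r := by
  have hr0 : r ≠ 0 := (one_pos.trans (h.one_lt_radius.trans_le hr)).ne'
  have hx := h.two_mul_mass_div_lt_one hA r
  rw [h.mass_of_radius_le hr, mul_div_cancel₀ _ two_ne_zero] at hx
  have hx0 : 1 - M R / r ≠ 0 := (sub_pos.2 hx).ne'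
  have hlog := ((((hasDerivAt_const r (M R)).div (hasDerivAt_id r) hr0).const_sub 1).log
    hx0).const_mul (-(1 / 2))
  convert! hlog using 1
  rw [slope, h.mass_of_radius_le hr, h.pressure_of_radius_le hr, mul_div_cancel₀ _ two_ne_zero]
  simp only [Pi.div_apply, id]
  generalize 1 - M R / r = z at *
  field_simp
  ring

theorem exists_tendsto_potential (h : IsClosedShellProfile A u M R) (hA : 0 ≤ A) (lam : ℝ) :
    ∃ c : ℝ, Tendsto (h.potential lam) atTop (nhds c) := by
  have hvacuum : ∀ r ≥ R, -(1 / 2) * log (1 - M R / r) +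
      (h.potential lam R + 1 / 2 * log (1 - M R / R)) = h.potential lam r := fun r hr => by
    have hderiv : ∀ s ∈ Icc R r, _ := fun s hs => h.hasDerivAt_log_schwarzschild hA hs.1
    linarith [h.potential_sub_potential hA hr
      (fun s hs => (hderiv s hs).continuousAt.continuousWithinAt)
      (fun s hs => hderiv s (Ioo_subset_Icc_self hs)) lam]
  have hlim : Tendsto (fun r => 1 - M R / r) atTop (nhds (1 - 0)) :=
    tendsto_const_nhds.sub (tendsto_const_nhds.div_atTop tendsto_id)
  exact ⟨_, (((hlim.log (by norm_num)).const_mul _).add_const _).congr'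
    ((eventually_ge_atTop R).mono hvacuum)⟩

end IsClosedShellProfile

/-! ### The matter ansatz -/

theorem cConst_eq_beta {ℓ : ℝ} (hℓ : -1 < ℓ) :
    cConst ℓ = 2 * π * ProbabilityTheory.beta (ℓ + 1) (1 / 2) := by
  have hbeta : Complex.betaIntegral (ℓ + 1 : ℝ) (1 / 2 : ℝ)
      = ((∫ s in Ioc (0 : ℝ) 1, s ^ ℓ / √(1 - s) : ℝ) : ℂ) := by
    rw [Complex.betaIntegral, intervalIntegral.integral_of_le zero_le_one,
      ← integral_complex_ofReal]
    refine setIntegral_congr_fun measurableSet_Ioc fun s hs => ?_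
    have hs' : 0 ≤ 1 - s := sub_nonneg.2 hs.2
    simp only [sqrt_eq_rpow, div_eq_mul_inv, ← rpow_neg hs', Complex.ofReal_mul,
      Complex.ofReal_cpow hs.1.le, Complex.ofReal_cpow hs']
    push_cast
    congr 2 <;> ring
  rw [cConst, ProbabilityTheory.beta_eq_betaIntegralReal _ _ (by linarith) (by norm_num), hbeta,
    Complex.ofReal_re]

theorem cConst_pos {ℓ : ℝ} (hℓ : -1 < ℓ) : 0 < cConst ℓ := by
  rw [cConst_eq_beta hℓ]
  exact mul_pos two_pi_pos (ProbabilityTheory.beta_pos (by linarith) (by norm_num))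

section Ansatz

variable {k ℓ L0 lam u r : ℝ} {y : ℝ → ℝ}

theorem rho_eq_zero_of_exp_le (h : exp (y r) ≤ √L0 / r) : rho k ℓ L0 y r = 0 := by
  rw [rho, Ioc_eq_empty h.not_gt, setIntegral_empty, mul_zero]

theorem pres_eq_zero_of_exp_le (h : exp (y r) ≤ √L0 / r) : pres k ℓ L0 y r = 0 := by
  rw [pres, Ioc_eq_empty h.not_gt, setIntegral_empty, mul_zero]

/-- The constant `A` in `scaledDensity` produced by the ansatz with `k = 0`, `ℓ = -1/2` and
`L₀ = lam²`. -/
noncomputable def ansatzAmplitude (lam : ℝ) : ℝ :=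
  8 * π * cConst (-(1 / 2)) * lam ^ 3 / 3

theorem ansatzAmplitude_pos (hlam : 0 < lam) : 0 < ansatzAmplitude lam := by
  have hc := cConst_pos (ℓ := -(1 / 2)) (by norm_num)
  unfold ansatzAmplitude
  positivity

theorem exists_le_ansatzAmplitude (B : ℝ) : ∃ lam > 0, B ≤ ansatzAmplitude lam := by
  have hc := cConst_pos (ℓ := -(1 / 2)) (by norm_num)
  have hlim : Tendsto ansatzAmplitude atTop atTop :=
    ((tendsto_pow_atTop three_ne_zero).const_mul_atTop (by positivity)).atTop_div_const three_pos
  exact ((eventually_gt_atTop 0).and (hlim.eventually_ge_atTop B)).exists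

theorem rho_eq_scaledDensity (hlam : 0 < lam) (hr : 0 < r) (hu : 1 ≤ u)
    (hy : exp (y r) = lam * u / r) :
    rho 0 (-(1 / 2)) (lam ^ 2) y r = scaledDensity (ansatzAmplitude lam) u r / (8 * π * r ^ 2) := by
  have hle : lam / r ≤ lam * u / r := by
    gcongr
    exact le_mul_of_one_le_right hlam.le hu
  have hexp : (2 * -(1 / 2) : ℝ) = -1 ∧ (-(1 / 2) + 1 / 2 : ℝ) = 0 := by norm_num
  rw [rho, hy, sqrt_sq hlam.le, hexp.1, hexp.2, ← intervalIntegral.integral_of_le hle]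
  simp only [rpow_neg_one, rpow_zero, one_mul, mul_one]
  rw [integral_pow, scaledDensity, ansatzAmplitude]
  norm_num
  field_simp

theorem pres_eq_scaledPressure (hlam : 0 < lam) (hr : 0 < r) (hu : 1 ≤ u)
    (hy : exp (y r) = lam * u / r) :
    pres 0 (-(1 / 2)) (lam ^ 2) y r
      = scaledPressure (ansatzAmplitude lam) u r / (8 * π * r ^ 2) := by
  have hle : lam / r ≤ lam * u / r := by
    gcongr
    exact le_mul_of_one_le_right hlam.le hu
  have hexp : (2 * -(1 / 2) : ℝ) = -1 ∧ (-(1 / 2) + 3 / 2 : ℝ) = 1 := by norm_num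
  rw [pres, hy, sqrt_sq hlam.le, hexp.1, hexp.2, ← intervalIntegral.integral_of_le hle]
  simp only [rpow_neg_one, rpow_zero, rpow_one, one_mul]
  rw [intervalIntegral.integral_sub (by simp) (by simp), integral_pow,
    intervalIntegral.integral_const, scaledPressure, ansatzAmplitude]
  norm_num
  field_simp
  ring

end Ansatz

namespace IsClosedShellProfile

variable {R r lam : ℝ} {u M : ℝ → ℝ}

theorem exp_potential_le (h : IsClosedShellProfile (ansatzAmplitude lam) u M R) (hlam : 0 < lam)
    (hr : 0 < r) (hr' : r ≤ 1) : exp (h.potential lam r) ≤ √(lam ^ 2) / r := by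
  rw [h.potential_of_le_one lam hr', exp_log hlam, sqrt_sq hlam.le]
  exact le_div_self hlam.le hr hr'

theorem density_eq_rho (h : IsClosedShellProfile (ansatzAmplitude lam) u M R) (hlam : 0 < lam)
    (hr : 0 < r) (hr' : r ≤ R) :
    h.density r = rho 0 (-(1 / 2)) (lam ^ 2) (h.potential lam) r := by
  rcases le_total r 1 with hr1 | hr1
  · rw [h.density_of_le_one hr1, rho_eq_zero_of_exp_le (h.exp_potential_le hlam hr hr1)]
  · rw [h.density_of_mem ⟨hr1, hr'⟩, rho_eq_scaledDensity hlam hr (h.one_le_ratio r ⟨hr1, hr'⟩)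
      (h.exp_potential (ansatzAmplitude_pos hlam).le hlam ⟨hr1, hr'⟩)]

theorem pressure_eq_pres (h : IsClosedShellProfile (ansatzAmplitude lam) u M R) (hlam : 0 < lam)
    (hr : 0 < r) (hr' : r ≤ R) :
    h.pressure r = pres 0 (-(1 / 2)) (lam ^ 2) (h.potential lam) r := by
  rcases le_total r 1 with hr1 | hr1
  · rw [h.pressure_of_le_one hr1, pres_eq_zero_of_exp_le (h.exp_potential_le hlam hr hr1)]
  · rw [h.pressure_of_mem ⟨hr1, hr'⟩, pres_eq_scaledPressure hlam hr
      (h.one_le_ratio r ⟨hr1, hr'⟩) (h.exp_potential (ansatzAmplitude_pos hlam).le hlam ⟨hr1, hr'⟩)]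

end IsClosedShellProfile

/-- Existence of static, spherically symmetric, asymptotically flat
solutions of the massless Einstein--Vlasov system with compactly supported matter,
which are highly relativistic: `4/5 < sup 2m/r < 8/9`. -/
theorem photon_shell_existence :
    ∃ (k ℓ L0 E0 R0 R1 : ℝ) (y ϱ p m : ℝ → ℝ),
      0 ≤ k ∧ -(1 / 2) ≤ ℓ ∧ 0 < L0 ∧ 0 < E0 ∧ 0 < R0 ∧ R0 < R1 ∧
      ContDiffOn ℝ 1 y (Set.Ici 0) ∧
      -- (i) matter quantities given by the ansatz for 0 < r ≤ R₁ and zero beyond,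
      (∀ r, 0 < r → r ≤ R1 → ϱ r = rho k ℓ L0 y r ∧ p r = pres k ℓ L0 y r) ∧
      (∀ r, R1 < r → ϱ r = 0 ∧ p r = 0) ∧
      (∀ r, m r = 4 * π * ∫ s in Set.Ioc (0 : ℝ) r, s ^ 2 * ϱ s) ∧
      -- the field equation for y holds with 2m/r < 1,
      (∀ r, 0 < r → 2 * m r / r < 1 ∧
        HasDerivAt y (-(1 - 2 * m r / r)⁻¹ * (4 * π * r * p r + m r / r ^ 2)) r) ∧
      -- (ii) the matter quantities vanish on [0,R₀] and on [R₁,∞) and are nontrivial,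
      (∀ r, 0 ≤ r → r ≤ R0 → ϱ r = 0 ∧ p r = 0) ∧
      (∀ r, R1 ≤ r → ϱ r = 0 ∧ p r = 0) ∧
      (∃ r, R0 < r ∧ r < R1 ∧ 0 < ϱ r) ∧
      -- (iii) asymptotic flatness: y(r) → ln E₀ as r → ∞,
      Filter.Tendsto y Filter.atTop (nhds (Real.log E0)) ∧
      -- (iv) the solution is highly relativistic.
      (4 / 5 < ⨆ r : {t : ℝ // 0 < t}, 2 * m r.1 / r.1) ∧
      (⨆ r : {t : ℝ // 0 < t}, 2 * m r.1 / r.1) < 8 / 9 := by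
  obtain ⟨lam, hlam, hA⟩ := exists_le_ansatzAmplitude (10 ^ 14)
  obtain ⟨u, M, R, h⟩ := exists_isClosedShellProfile hA
  have hA0 := ansatzAmplitude_pos hlam
  obtain ⟨c, hc⟩ := h.exists_tendsto_potential hA0.le lam
  obtain ⟨r₀, hr₀⟩ := nonempty_Ioo.2 h.one_lt_radius
  have hvacuum : ∀ r, R ≤ r → h.density r = 0 ∧ h.pressure r = 0 := fun r hr =>
    ⟨h.density_of_radius_le hr, h.pressure_of_radius_le hr⟩
  exact ⟨0, -(1 / 2), lam ^ 2, exp c, 1, R, h.potential lam, h.density, h.pressure, h.mass,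
    le_rfl, le_rfl, pow_pos hlam 2, exp_pos c, one_pos, h.one_lt_radius,
    (h.contDiff_potential hA0.le lam).contDiffOn,
    fun r hr hrR => ⟨h.density_eq_rho hlam hr hrR, h.pressure_eq_pres hlam hr hrR⟩,
    fun r hr => hvacuum r hr.le,
    h.mass_eq_integral_density,
    fun r _ => ⟨h.two_mul_mass_div_lt_one hA0.le r, h.hasDerivAt_potential hA0.le lam r⟩,
    fun r _ hr => ⟨h.density_of_le_one hr, h.pressure_of_le_one hr⟩,
    hvacuum,
    ⟨r₀, hr₀.1, hr₀.2, h.density_pos hA0 hr₀⟩,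
    (log_exp c).symm ▸ hc,
    h.lt_iSup_compactness hA,
    h.iSup_compactness_lt hA0.le⟩
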